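/- Shortening a blue cycle by one: let k ≥ 3, n > 3k − 3, and suppose the board initially contains a blue cycle of length n + 1. Then r̃_H(C_k, C_n) ≤ k + 2, i.e., Builder can force a red C_k or a blue C_n within k + 2 further rounds. -/

import Mathlib

open SimpleGraph

/-- A board state: the set of red edges and the set of blue edges. -/
abbrev Board : Type := Set (Sym2 ℕ) × Set (Sym2 ℕ)

/-- The set of already colored edges of a board. -/
def Board.colored (B : Board) : Set (Sym2 ℕ) := B.1 ∪ B.2

/-- A Builder strategy selects an edge given the current board. -/
abbrev BuilderStrat : Type := Board → Sym2 ℕ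

/-- A Painter strategy colors the selected edge (true = red, false = blue). -/
abbrev PainterStrat : Type := Board → Sym2 ℕ → Bool

/-- The board after `t` rounds of play from `init`. -/
def playGame (b : BuilderStrat) (p : PainterStrat) (init : Board) : ℕ → Board
  | 0 => init
  | t + 1 =>
      let B := playGame b p init t
      let e := b B
      if p B e then (insert e B.1, B.2) else (B.1, insert e B.2)

/-- Builder's strategy is valid from `init`: along any play it always selects a
previously unselected non-loop edge. -/
def ValidFrom (b : BuilderStrat) (init : Board) : Prop :=
  ∀ p : PainterStrat, ∀ t : ℕ,
    ¬ (b (playGame b p init t)).IsDiag ∧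
      b (playGame b p init t) ∉ (playGame b p init t).colored

/-- Builder can force the winning condition `W` within `t` rounds, starting from `init`. -/
def BuilderWinsIn (init : Board) (W : Board → Prop) (t : ℕ) : Prop :=
  ∃ b : BuilderStrat, ValidFrom b init ∧
    ∀ p : PainterStrat, ∃ s, s ≤ t ∧ W (playGame b p init s)

/-- `G` contains a copy of `H`. -/
def HasCopy {α β : Type} (H : SimpleGraph α) (G : SimpleGraph β) : Prop :=
  ∃ f : α ↪ β, ∀ x y, H.Adj x y → G.Adj (f x) (f y)

/-- The red part of the board contains a copy of `H`. -/
def RedCopy {α : Type} (H : SimpleGraph α) (B : Board) : Prop :=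
  HasCopy H (fromEdgeSet B.1)

/-- The blue part of the board contains a copy of `H`. -/
def BlueCopy {α : Type} (H : SimpleGraph α) (B : Board) : Prop :=
  HasCopy H (fromEdgeSet B.2)

/-- The empty board. -/
def emptyBoard : Board := (∅, ∅)

/-- Winning condition: a red `C_k` or a blue `C_n`. -/
def WinCC (k n : ℕ) (B : Board) : Prop :=
  RedCopy (cycleGraph k) B ∨ BlueCopy (cycleGraph n) B

/-- Winning condition: a red `C_k` or a blue path on `n` vertices. -/
def WinCP (k n : ℕ) (B : Board) : Prop :=
  RedCopy (cycleGraph k) B ∨ BlueCopy (pathGraph n) B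

/-- A board consisting of a single blue cycle on the vertices `0, …, m-1`. -/
def blueCycleBoard (m : ℕ) : Board :=
  (∅, {e | ∃ i : ℕ, i < m ∧ e = s(i, (i + 1) % m)})

/-- A board consisting of a single blue path on the vertices `0, …, m-1`. -/
def bluePathBoard (m : ℕ) : Board :=
  (∅, {e | ∃ i : ℕ, i + 1 < m ∧ e = s(i, i + 1)})

/-- Builder can force `W` within `t` rounds from the given board, described recursively. -/
def Forces (W : Board → Prop) : ℕ → Board → Prop
  | 0, B => W B
  | t + 1, B => W B ∨ ∃ e : Sym2 ℕ, ¬ e.IsDiag ∧ e ∉ B.colored ∧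
      Forces W t (insert e B.1, B.2) ∧ Forces W t (B.1, insert e B.2)

theorem Forces.of_win {W : Board → Prop} {B : Board} (h : W B) : ∀ t, Forces W t B
  | 0 => h
  | _ + 1 => Or.inl h

theorem Forces.succ {W : Board → Prop} {t : ℕ} {B : Board} (h : Forces W t B) :
    Forces W (t + 1) B := by
  induction t generalizing B with
  | zero => exact Or.inl h
  | succ t ih =>
    rcases h with h | ⟨e, hd, hc, hr, hb⟩
    · exact Or.inl h
    · exact Or.inr ⟨e, hd, hc, ih hr, ih hb⟩

theorem Forces.mono {W : Board → Prop} {s t : ℕ} {B : Board} (h : Forces W s B) (hst : s ≤ t) :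
    Forces W t B :=
  Nat.le_induction h (fun _ _ ih => ih.succ) t hst

/-- Builder may pretend to select an edge even if it is already colored. -/
theorem Forces.select {W : Board → Prop} {t : ℕ} {B : Board} {e : Sym2 ℕ} (hd : ¬ e.IsDiag)
    (hr : Forces W t (insert e B.1, B.2)) (hb : Forces W t (B.1, insert e B.2)) :
    Forces W (t + 1) B := by
  by_cases h1 : e ∈ B.1
  · rw [Set.insert_eq_of_mem h1] at hr
    exact hr.succ
  by_cases h2 : e ∈ B.2
  · rw [Set.insert_eq_of_mem h2] at hb
    exact hb.succ
  · exact Or.inr ⟨e, hd, fun h => h.elim h1 h2, hr, hb⟩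

/-- If every listed edge is red or wins for Builder as soon as it becomes blue, and the listed
edges together win for Builder when red, then Builder wins by selecting all of them. -/
theorem Forces.of_list {W : Board → Prop} (L : List (Sym2 ℕ)) {B : Board}
    (hL : ∀ e ∈ L, e ∈ B.1 ∨ (¬ e.IsDiag ∧ ∀ R, W (R, insert e B.2)))
    (hW : ∀ R, (∀ e ∈ L, e ∈ R) → B.1 ⊆ R → W (R, B.2)) : Forces W L.length B := by
  induction L generalizing B with
  | nil => exact hW B.1 (by simp) subset_rfl
  | cons e L ih =>
    have hL' : ∀ f ∈ L, f ∈ B.1 ∨ (¬ f.IsDiag ∧ ∀ R, W (R, insert f B.2)) :=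
      fun f hf => hL f (List.mem_cons_of_mem e hf)
    rcases hL e List.mem_cons_self with he | ⟨hd, hb⟩
    · exact (ih hL' fun R hR hBR =>
        hW R (List.forall_mem_cons.2 ⟨hBR he, hR⟩) hBR).succ
    · refine Forces.select hd (ih (fun f hf => ?_) fun R hR hBR => ?_) (Forces.of_win (hb _) _)
      · exact (hL' f hf).imp_left (Set.mem_insert_of_mem e)
      · exact hW R (List.forall_mem_cons.2 ⟨hBR (Set.mem_insert _ _), hR⟩)
          ((Set.subset_insert _ _).trans hBR)

theorem finite_colored_playGame (b : BuilderStrat) (p : PainterStrat) {init : Board}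
    (h : init.colored.Finite) (t : ℕ) : (playGame b p init t).colored.Finite := by
  induction t with
  | zero => exact h
  | succ t ih =>
    refine (ih.insert (b (playGame b p init t))).subset ?_
    simp only [playGame, Board.colored]
    split_ifs
    · rw [Set.insert_union]
    · rw [Set.union_insert]

theorem exists_uncolored_edge {B : Board} (h : B.colored.Finite) :
    ∃ e : Sym2 ℕ, ¬ e.IsDiag ∧ e ∉ B.colored := by
  have hinj : Function.Injective fun n : ℕ => s(0, n + 1) := by
    intro a b hab
    simpa using hab
  obtain ⟨e, ⟨n, rfl⟩, he⟩ := (Set.infinite_range_of_injective hinj).exists_notMem_finite h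
  exact ⟨_, by simp, he⟩

open Classical in
theorem Forces.builderWinsIn {W : Board → Prop} {t : ℕ} {init : Board}
    (h : Forces W t init) (hfin : init.colored.Finite) : BuilderWinsIn init W t := by
  have key : ∀ B : Board, ∃ e : Sym2 ℕ, (B.colored.Finite → ¬ e.IsDiag ∧ e ∉ B.colored) ∧
      (B.colored.Finite → ¬ W B → ∀ t, Forces W (t + 1) B →
        Forces W t (insert e B.1, B.2) ∧ Forces W t (B.1, insert e B.2)) := by
    intro B
    by_cases hB : B.colored.Finite ∧ ¬ W B ∧ ∃ t, Forces W t B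
    · obtain ⟨-, hW, ht⟩ := hB
      have hmin := fun s => Nat.find_min' ht (m := s)
      have hspec := Nat.find_spec ht
      cases hs : Nat.find ht with
      | zero => exact absurd (by simpa [hs] using hspec : Forces W 0 B) hW
      | succ s =>
        rw [hs] at hspec
        obtain ⟨e, hd, hc, hr, hb⟩ := hspec.resolve_left hW
        refine ⟨e, fun _ => ⟨hd, hc⟩, fun _ _ t ht' => ?_⟩
        have := hmin _ ht'
        exact ⟨hr.mono (by omega), hb.mono (by omega)⟩
    · by_cases hB' : B.colored.Finite
      · obtain ⟨e, he⟩ := exists_uncolored_edge hB'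
        exact ⟨e, fun _ => he, fun h1 h2 t ht => absurd ⟨h1, h2, _, ht⟩ hB⟩
      · exact ⟨s(0, 1), fun h => absurd h hB', fun h => absurd h hB'⟩
  choose b hb hwin using key
  refine ⟨b, fun p t => hb _ (finite_colored_playGame b p hfin t), fun p => ?_⟩
  have hplay : ∀ t s, Forces W t (playGame b p init s) →
      ∃ r, r ≤ s + t ∧ W (playGame b p init r) := by
    intro t
    induction t with
    | zero => exact fun s hs => ⟨s, le_rfl, hs⟩
    | succ t ih =>
      intro s hs
      by_cases hW : W (playGame b p init s)
      · exact ⟨s, by omega, hW⟩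
      obtain ⟨hr, hbl⟩ := hwin _ (finite_colored_playGame b p hfin s) hW t hs
      obtain ⟨r, hrs, hr⟩ := ih (s + 1) (by
        simp only [playGame]
        split_ifs
        exacts [hr, hbl])
      exact ⟨r, by omega, hr⟩
  simpa using hplay t 0 h

/-- A cyclic sequence of `m` distinct vertices with consecutive pairs in `E` yields a copy of
the cycle on `m` vertices. -/
theorem hasCopy_cycleGraph {m : ℕ} {E : Set (Sym2 ℕ)} (c : ℕ → ℕ)
    (hinj : ∀ i j, i < j → j < m → c i ≠ c j) (hstep : ∀ i, i + 1 < m → s(c i, c (i + 1)) ∈ E)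
    (hclose : s(c (m - 1), c 0) ∈ E) : HasCopy (cycleGraph m) (fromEdgeSet E) := by
  have hinj' : Function.Injective fun i : Fin m => c i := by
    intro i j hij
    rcases lt_trichotomy i j with h | h | h
    · exact absurd hij (hinj i j h j.2)
    · exact h
    · exact absurd hij.symm (hinj j i h i.2)
  have hmem : ∀ x y : Fin m, (y - x).val = 1 → s(c x, c y) ∈ E := by
    intro x y hxy
    rw [Fin.sub_def] at hxy
    simp only at hxy
    have hx := x.2
    have hy := y.2
    by_cases h : (x : ℕ) ≤ y
    · rw [show m - (x : ℕ) + y = (y - x) + m by omega, Nat.add_mod_right,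
        Nat.mod_eq_of_lt (by omega)] at hxy
      rw [show (y : ℕ) = x + 1 by omega]
      exact hstep x (by omega)
    · rw [Nat.mod_eq_of_lt (by omega)] at hxy
      rw [show (x : ℕ) = m - 1 by omega, show (y : ℕ) = 0 by omega]
      exact hclose
  refine ⟨⟨fun i => c i, hinj'⟩, fun x y hxy => ?_⟩
  refine (fromEdgeSet_adj E).2 ⟨?_, fun h => hxy.ne (hinj' h)⟩
  rcases cycleGraph_adj'.1 hxy with h | h
  · exact Sym2.eq_swap ▸ hmem y x h
  · exact hmem x y h

theorem Forces.of_red_cycle {k n : ℕ} {B : Board} (hk : 1 < k) (c : ℕ → ℕ)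
    (hinj : ∀ i j, i < j → j < k → c i ≠ c j)
    (hstep : ∀ i, i + 1 < k → s(c i, c (i + 1)) ∈ B.1 ∨
      BlueCopy (cycleGraph n) (B.1, insert s(c i, c (i + 1)) B.2))
    (hclose : s(c (k - 1), c 0) ∈ B.1 ∨
      BlueCopy (cycleGraph n) (B.1, insert s(c (k - 1), c 0) B.2)) :
    Forces (WinCC k n) k B := by
  let L := s(c (k - 1), c 0) :: (List.range (k - 1)).map fun i => s(c i, c (i + 1))
  have hlen : L.length = k := by simp [L]; omega
  rw [← hlen]
  conv in WinCC _ _ => rw [hlen]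
  refine Forces.of_list L ?_ fun R hR _ => Or.inl (hasCopy_cycleGraph c hinj ?_ ?_)
  · simp only [L, List.forall_mem_cons, List.forall_mem_map, List.mem_range]
    refine ⟨hclose.imp_right fun h => ⟨?_, fun R => Or.inr h⟩, fun i hi =>
      (hstep i (by omega)).imp_right fun h => ⟨?_, fun R => Or.inr h⟩⟩
    · simpa using (hinj 0 (k - 1) (by omega) (by omega)).symm
    · simpa using hinj i (i + 1) (by omega) (by omega)
  · exact fun i hi => hR _ (List.mem_cons_of_mem _ (List.mem_map.2 ⟨i, by simp; omega, rfl⟩))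
  · exact hR _ List.mem_cons_self

theorem step_mem_blueCycleBoard {m i : ℕ} (h : i + 1 < m) :
    s(i, i + 1) ∈ (blueCycleBoard m).2 :=
  ⟨i, by omega, by rw [Nat.mod_eq_of_lt h]⟩

theorem close_mem_blueCycleBoard (n : ℕ) : s(n, 0) ∈ (blueCycleBoard (n + 1)).2 :=
  ⟨n, by omega, by rw [Nat.mod_self]⟩

/-- A blue chord joining two vertices at distance two shortens the blue cycle by one. -/
theorem hasCopy_of_short_chord {n j : ℕ} {E : Set (Sym2 ℕ)}
    (hE : (blueCycleBoard (n + 1)).2 ⊆ E) (hj : j + 2 ≤ n) (h : s(j, j + 2) ∈ E) :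
    HasCopy (cycleGraph n) (fromEdgeSet E) := by
  refine hasCopy_cycleGraph (fun i => if i ≤ j then i else i + 1) ?_ ?_ ?_
  · intro a b hab hb
    split_ifs <;> omega
  · intro i hi
    rcases lt_trichotomy i j with h' | rfl | h'
    · rw [if_pos (by omega), if_pos (by omega)]
      exact hE (step_mem_blueCycleBoard (by omega))
    · rw [if_pos le_rfl, if_neg (by omega)]
      exact h
    · rw [if_neg (by omega), if_neg (by omega)]
      exact hE (step_mem_blueCycleBoard (by omega))
  · rw [if_neg (by omega), if_pos (by omega), show n - 1 + 1 = n by omega]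
    exact hE (close_mem_blueCycleBoard n)

/-- Two crossing blue chords that together skip exactly one vertex shorten the blue cycle
by one. -/
theorem hasCopy_of_crossing_chords {n p q p' q' : ℕ} {E : Set (Sym2 ℕ)}
    (hE : (blueCycleBoard (n + 1)).2 ⊆ E) (hp : p < p') (hpq : p' ≤ q) (hq : q < q')
    (hn : q' ≤ n) (hsum : p' + q' = p + q + 3) (h : s(p, q) ∈ E) (h' : s(p', q') ∈ E) :
    HasCopy (cycleGraph n) (fromEdgeSet E) := by
  refine hasCopy_cycleGraph
    (fun i => if i ≤ p then i else if i + 2 ≤ q' then q + p + 1 - i else i + 1) ?_ ?_ ?_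
  · intro a b hab hb
    split_ifs <;> omega
  · intro i hi
    rcases lt_trichotomy i p with h1 | rfl | h1
    · rw [if_pos (by omega), if_pos (by omega)]
      exact hE (step_mem_blueCycleBoard (by omega))
    · rw [if_pos le_rfl, if_neg (by omega), if_pos (by omega),
        show q + i + 1 - (i + 1) = q by omega]
      exact h
    · rw [if_neg (show ¬ i ≤ p by omega), if_neg (show ¬ i + 1 ≤ p by omega)]
      rcases lt_trichotomy (i + 2) q' with h2 | h2 | h2
      · rw [if_pos (by omega), if_pos (by omega), Sym2.eq_swap,
          show q + p + 1 - i = q + p + 1 - (i + 1) + 1 by omega]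
        exact hE (step_mem_blueCycleBoard (by omega))
      · rw [if_pos (by omega), if_neg (by omega), show q + p + 1 - i = p' by omega,
          show i + 1 + 1 = q' by omega]
        exact h'
      · rw [if_neg (by omega), if_neg (by omega)]
        exact hE (step_mem_blueCycleBoard (by omega))
  · rw [if_neg (by omega), if_neg (by omega), if_pos (by omega), show n - 1 + 1 = n by omega]
    exact hE (close_mem_blueCycleBoard n)

theorem finite_colored_blueCycleBoard (m : ℕ) : (blueCycleBoard m).colored.Finite := by
  refine ((Set.finite_Iio m).image fun i => s(i, (i + 1) % m)).subset ?_
  rintro e (he | ⟨i, hi, rfl⟩)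
  · exact absurd he (Set.notMem_empty e)
  · exact ⟨i, hi, rfl⟩

/-- Shortening a blue cycle by one: if `k ≥ 3`, `n > 3k - 3` and the board contains a
blue cycle of length `n + 1`, then `r̃_H(C_k, C_n) ≤ k + 2`. -/
theorem shorten_blue_cycle_by_one (k n : ℕ) (hk : 3 ≤ k) (hn : 3 * k - 3 < n) :
    BuilderWinsIn (blueCycleBoard (n + 1)) (WinCC k n) (k + 2) := by
  refine Forces.builderWinsIn ?_ (finite_colored_blueCycleBoard _)
  have hchord : ∀ {R E : Set (Sym2 ℕ)} {x y : ℕ}, (blueCycleBoard (n + 1)).2 ⊆ E →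
      (y = x + 2 ∧ y ≤ n ∨ x = y + 2 ∧ x ≤ n) →
      BlueCopy (cycleGraph n) (R, insert s(x, y) E) := by
    rintro R E x y hE (⟨rfl, h⟩ | ⟨rfl, h⟩)
    · exact hasCopy_of_short_chord (hE.trans (Set.subset_insert _ _)) h (Set.mem_insert _ _)
    · exact hasCopy_of_short_chord (hE.trans (Set.subset_insert _ _)) h
        (Sym2.eq_swap ▸ Set.mem_insert _ _)
  refine Forces.select (e := s(0, 2 * k - 2)) (by simp; omega) ?_ ?_
  · refine Forces.succ (Forces.of_red_cycle (by omega) (fun i => 2 * i) ?_ ?_ ?_)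
    · intro i j hij hj
      omega
    · refine fun i hi => Or.inr (hchord ?_ ?_)
      · exact subset_rfl
      · omega
    · refine Or.inl (Or.inl ?_)
      rw [Sym2.eq_swap, show 2 * (k - 1) = 2 * k - 2 by omega]
  refine Forces.select (e := s(k, 3 * k - 3)) (by simp; omega) ?_ ?_
  · obtain ⟨a, h, ha, hh⟩ : ∃ a h, (a = 1 ∨ a = 2) ∧ k + 2 = a + 2 * h :=
      ⟨2 - k % 2, (k + 2 - (2 - k % 2)) / 2, by omega, by omega⟩
    refine Forces.of_red_cycle (by omega)
      (fun i => if i < h then a + 2 * i else 3 * k - 3 - 2 * (i - h)) ?_ ?_ ?_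
    · intro i j hij hj
      split_ifs <;> omega
    · intro i hi
      dsimp only
      by_cases hih : i + 1 = h
      · left
        rw [if_pos (by omega), if_neg (by omega), show a + 2 * i = k by omega,
          show 3 * k - 3 - 2 * (i + 1 - h) = 3 * k - 3 by omega]
        exact Set.mem_insert _ _
      · right
        refine hchord (Set.subset_insert _ _) ?_
        split_ifs <;> omega
    · right
      dsimp only
      rw [if_neg (by omega), if_pos (by omega)]
      refine hasCopy_of_crossing_chords (p := 0) (q := 2 * k - 2) (p' := a) (q' := 2 * k + 1 - a)
        ((Set.subset_insert _ _).trans (Set.subset_insert _ _)) (by omega) (by omega) (by omega)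
        (by omega) (by omega) (Set.mem_insert_of_mem _ (Set.mem_insert _ _)) ?_
      rw [show a + 2 * 0 = a by omega,
        show 3 * k - 3 - 2 * (k - 1 - h) = 2 * k + 1 - a by omega]
      exact Set.mem_insert_iff.2 (Or.inl Sym2.eq_swap)
  · have hE := (Set.subset_insert s(0, 2 * k - 2) (blueCycleBoard (n + 1)).2).trans
      (Set.subset_insert s(k, 3 * k - 3) _)
    refine Forces.of_red_cycle (by omega) (fun i => k - 2 + 2 * i) ?_ ?_ ?_
    · intro i j hij hj
      omega
    · refine fun i hi => Or.inr (hchord ?_ ?_)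
      · exact hE
      · omega
    · right
      dsimp only
      rw [show k - 2 + 2 * 0 = k - 2 by omega,
        show k - 2 + 2 * (k - 1) = 3 * k - 4 by omega]
      exact hasCopy_of_crossing_chords (hE.trans (Set.subset_insert _ _)) (by omega) (by omega)
        (by omega) (by omega) (by omega)
        (Set.mem_insert_iff.2 (Or.inl Sym2.eq_swap)) (Set.mem_insert_of_mem _ (Set.mem_insert _ _))
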